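/- arXiv:1712.01181 — 7 statements merged into one kernel-verified Lean document; each statement's English description precedes it below -/
import Mathlib

section
/- Let q, r : ℝ × ℝ → ℂ be functions such that q(·,t) and r(·,t) are twice differentiable in x for each t and q(x,·), r(x,·) are differentiable in t for each x, with all these partial derivatives continuous. For ζ ∈ ℂ define the 2×2 complex matrices M(ζ,x,t) = [[-iζ, q(x,t)],[r(x,t), iζ]] and N(ζ,x,t) = [[-i q(x,t) r(x,t) - 2iζ², i q_x(x,t) + 2ζ q(x,t)],[-i r_x(x,t) + 2ζ r(x,t), i q(x,t) r(x,t) + 2iζ²]]. Then the zero-curvature equation ∂_t M(ζ,x,t) − ∂_x N(ζ,x,t) + M(ζ,x,t)·N(ζ,x,t) − N(ζ,x,t)·M(ζ,x,t) = 0 holds for all ζ ∈ ℂ and all (x,t) ∈ ℝ² if and only if q and r satisfy the coupled Schrödinger equations i q_t + q_{xx} − 2 q² r = 0 and i r_t − r_{xx} + 2 r² q = 0 at every (x,t) ∈ ℝ². -/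
/-!
The zero-curvature expression `∂ₜM − ∂ₓN + MN − NM` is independent of `ζ`: its `ζ²` terms
cancel inside the commutator, its `ζ` terms between the commutator and `∂ₓN`, and the diagonal
vanishes because the commutator contributes exactly `∓i (qr)ₓ` there, the diagonal of `∂ₓN`. What remains, `laxCurvature_eq`, is the off-diagonal matrix whose entries
are `-i` times the left-hand sides of the two coupled Schrödinger equations, so it vanishes
precisely when both equations hold.
-/

open Matrix

/-- Partial derivative in the first (space) variable. -/
noncomputable def pdx (q : ℝ × ℝ → ℂ) (x t : ℝ) : ℂ := deriv (fun s : ℝ => q (s, t)) x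

/-- Second partial derivative in the first (space) variable. -/
noncomputable def pdxx (q : ℝ × ℝ → ℂ) (x t : ℝ) : ℂ := deriv (fun s : ℝ => pdx q s t) x

/-- Partial derivative in the second (time) variable. -/
noncomputable def pdt (q : ℝ × ℝ → ℂ) (x t : ℝ) : ℂ := deriv (fun s : ℝ => q (x, s)) t

/-- The Lax matrix `M(ζ,x,t)`. -/
noncomputable def laxM (q r : ℝ × ℝ → ℂ) (ζ : ℂ) (x t : ℝ) : Matrix (Fin 2) (Fin 2) ℂ :=
  !![-Complex.I * ζ, q (x, t);
     r (x, t), Complex.I * ζ]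

/-- The Lax matrix `N(ζ,x,t)`. -/
noncomputable def laxN (q r : ℝ × ℝ → ℂ) (ζ : ℂ) (x t : ℝ) : Matrix (Fin 2) (Fin 2) ℂ :=
  !![-Complex.I * q (x, t) * r (x, t) - 2 * Complex.I * ζ ^ 2,
       Complex.I * pdx q x t + 2 * ζ * q (x, t);
     -Complex.I * pdx r x t + 2 * ζ * r (x, t),
       Complex.I * q (x, t) * r (x, t) + 2 * Complex.I * ζ ^ 2]

/-- Entrywise partial `t`-derivative of `M(ζ,x,t)`. -/
noncomputable def laxMt (q r : ℝ × ℝ → ℂ) (ζ : ℂ) (x t : ℝ) : Matrix (Fin 2) (Fin 2) ℂ :=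
  Matrix.of fun i j => deriv (fun s : ℝ => laxM q r ζ x s i j) t

/-- Entrywise partial `x`-derivative of `N(ζ,x,t)`. -/
noncomputable def laxNx (q r : ℝ × ℝ → ℂ) (ζ : ℂ) (x t : ℝ) : Matrix (Fin 2) (Fin 2) ℂ :=
  Matrix.of fun i j => deriv (fun s : ℝ => laxN q r ζ s t i j) x

theorem laxMt_eq (q r : ℝ × ℝ → ℂ) (ζ : ℂ) (x t : ℝ) :
    laxMt q r ζ x t = !![0, pdt q x t; pdt r x t, 0] := by
  ext i j
  fin_cases i <;> fin_cases j <;> simp [laxMt, laxM, pdt]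

theorem laxNx_eq (q r : ℝ × ℝ → ℂ) (ζ : ℂ) (x t : ℝ)
    (hq1 : DifferentiableAt ℝ (fun s : ℝ => q (s, t)) x)
    (hq2 : DifferentiableAt ℝ (fun s : ℝ => pdx q s t) x)
    (hr1 : DifferentiableAt ℝ (fun s : ℝ => r (s, t)) x)
    (hr2 : DifferentiableAt ℝ (fun s : ℝ => pdx r s t) x) :
    laxNx q r ζ x t =
      !![-Complex.I * (pdx q x t * r (x, t) + q (x, t) * pdx r x t),
          Complex.I * pdxx q x t + 2 * ζ * pdx q x t;
         -Complex.I * pdxx r x t + 2 * ζ * pdx r x t,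
          Complex.I * (pdx q x t * r (x, t) + q (x, t) * pdx r x t)] := by
  have dq : HasDerivAt (fun s : ℝ => q (s, t)) (pdx q x t) x := hq1.hasDerivAt
  have dr : HasDerivAt (fun s : ℝ => r (s, t)) (pdx r x t) x := hr1.hasDerivAt
  have dqx : HasDerivAt (fun s : ℝ => pdx q s t) (pdxx q x t) x := hq2.hasDerivAt
  have drx : HasDerivAt (fun s : ℝ => pdx r s t) (pdxx r x t) x := hr2.hasDerivAt
  have h00 := (((dq.const_mul (-Complex.I)).mul dr).sub_const (2 * Complex.I * ζ ^ 2)).deriv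
  have h01 := ((dqx.const_mul Complex.I).add (dq.const_mul (2 * ζ))).deriv
  have h10 := ((drx.const_mul (-Complex.I)).add (dr.const_mul (2 * ζ))).deriv
  have h11 := (((dq.const_mul Complex.I).mul dr).add_const (2 * Complex.I * ζ ^ 2)).deriv
  ext i j
  fin_cases i <;> fin_cases j
  · exact h00.trans (by simp; ring)
  · exact h01
  · exact h10
  · exact h11.trans (by simp; ring)

theorem laxCurvature_eq (q r : ℝ × ℝ → ℂ) (ζ : ℂ) (x t : ℝ)
    (hq1 : DifferentiableAt ℝ (fun s : ℝ => q (s, t)) x)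
    (hq2 : DifferentiableAt ℝ (fun s : ℝ => pdx q s t) x)
    (hr1 : DifferentiableAt ℝ (fun s : ℝ => r (s, t)) x)
    (hr2 : DifferentiableAt ℝ (fun s : ℝ => pdx r s t) x) :
    laxMt q r ζ x t - laxNx q r ζ x t
        + laxM q r ζ x t * laxN q r ζ x t - laxN q r ζ x t * laxM q r ζ x t =
      !![0, -Complex.I *
            (Complex.I * pdt q x t + pdxx q x t - 2 * q (x, t) ^ 2 * r (x, t));
         -Complex.I *
            (Complex.I * pdt r x t - pdxx r x t + 2 * r (x, t) ^ 2 * q (x, t)), 0] := by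
  rw [laxMt_eq, laxNx_eq q r ζ x t hq1 hq2 hr1 hr2]
  ext i j
  fin_cases i <;> fin_cases j <;>
    simp [laxM, laxN, Matrix.mul_apply, Fin.sum_univ_two] <;>
    ring_nf <;> simp only [Complex.I_sq] <;> ring

/-- The zero-curvature equation `∂ₜM − ∂ₓN + MN − NM = 0` holds for all spectral parameters
`ζ ∈ ℂ` and all `(x,t)` if and only if `(q,r)` satisfies the coupled Schrödinger equations
`i qₜ + qₓₓ − 2q²r = 0` and `i rₜ − rₓₓ + 2r²q = 0` everywhere. -/
theorem zero_curvature_iff_coupled_schrodinger (q r : ℝ × ℝ → ℂ)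
    (hqx1 : ∀ t : ℝ, Differentiable ℝ fun x : ℝ => q (x, t))
    (hqx2 : ∀ t : ℝ, Differentiable ℝ fun x : ℝ => pdx q x t)
    (hqt : ∀ x : ℝ, Differentiable ℝ fun t : ℝ => q (x, t))
    (hrx1 : ∀ t : ℝ, Differentiable ℝ fun x : ℝ => r (x, t))
    (hrx2 : ∀ t : ℝ, Differentiable ℝ fun x : ℝ => pdx r x t)
    (hrt : ∀ x : ℝ, Differentiable ℝ fun t : ℝ => r (x, t))
    (hqxc : Continuous fun p : ℝ × ℝ => pdx q p.1 p.2)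
    (hqxxc : Continuous fun p : ℝ × ℝ => pdxx q p.1 p.2)
    (hqtc : Continuous fun p : ℝ × ℝ => pdt q p.1 p.2)
    (hrxc : Continuous fun p : ℝ × ℝ => pdx r p.1 p.2)
    (hrxxc : Continuous fun p : ℝ × ℝ => pdxx r p.1 p.2)
    (hrtc : Continuous fun p : ℝ × ℝ => pdt r p.1 p.2) :
    (∀ (ζ : ℂ) (x t : ℝ),
        laxMt q r ζ x t - laxNx q r ζ x t
          + laxM q r ζ x t * laxN q r ζ x t - laxN q r ζ x t * laxM q r ζ x t = 0)
      ↔ (∀ x t : ℝ,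
          Complex.I * pdt q x t + pdxx q x t - 2 * q (x, t) ^ 2 * r (x, t) = 0
            ∧ Complex.I * pdt r x t - pdxx r x t + 2 * r (x, t) ^ 2 * q (x, t) = 0) := by
  have key := fun (ζ : ℂ) (x t : ℝ) =>
    laxCurvature_eq q r ζ x t (hqx1 t x) (hqx2 t x) (hrx1 t x) (hrx2 t x)
  constructor
  · intro h x t
    have h0 := (key 0 x t).symm.trans (h 0 x t)
    have h01 := congrFun (congrFun h0 0) 1
    have h10 := congrFun (congrFun h0 1) 0
    have hI : -Complex.I ≠ 0 := neg_ne_zero.mpr Complex.I_ne_zero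
    exact ⟨(mul_eq_zero.mp h01).resolve_left hI, (mul_eq_zero.mp h10).resolve_left hI⟩
  · intro h ζ x t
    rw [key, (h x t).1, (h x t).2]
    ext i j
    fin_cases i <;> fin_cases j <;> simp
end

section
/- Let σ1 be the 2×2 matrix [[0,1],[1,0]] and Λ = diag(1,−1). Let Q : ℝ → Matrix (Fin 2) (Fin 2) ℂ satisfy the symmetry conj(Q(−x)) = −σ1 · Q(x) · σ1 for all x ∈ ℝ (where conj is entrywise complex conjugation). Let ζ ∈ ℂ and let Y : ℝ → (Fin 2 → ℂ) be differentiable and satisfy Y′(x) = (−iζΛ + Q(x)) · Y(x) for all x ∈ ℝ. Then the function Ŷ(x) := σ1 · conj(Y(−x)) is differentiable and satisfies Ŷ′(x) = (−i ζ̂ Λ + Q(x)) · Ŷ(x) for all x ∈ ℝ, where ζ̂ = −conj(ζ). -/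
/-!
Conjugating the equation at `-x` turns `-iζΛ + Q(-x)` into `i conj(ζ) Λ - σ₁ Q(x) σ₁`, and the
reflection `x ↦ -x` contributes a sign to the derivative. Moving `σ₁` past this matrix, using
`σ₁² = 1` for the potential and the anticommutation `σ₁ Λ = -Λ σ₁` for the spectral term, gives
`i conj(ζ) Λ + Q(x)` acting on `σ₁ conj(Y(-x))`; this is the content of `sigma1_intertwines`.
-/

open Matrix Filter

/-- The Pauli matrix `σ₁ = [[0,1],[1,0]]`. -/
def sigma1 : Matrix (Fin 2) (Fin 2) ℂ := !![0, 1; 1, 0]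

/-- The matrix `Λ = diag(1,−1)`. -/
def Lam : Matrix (Fin 2) (Fin 2) ℂ := !![1, 0; 0, -1]

theorem sigma1_mul_self : sigma1 * sigma1 = 1 := by
  ext i j
  fin_cases i <;> fin_cases j <;> simp [sigma1]

theorem sigma1_mul_Lam : sigma1 * Lam = -(Lam * sigma1) := by
  ext i j
  fin_cases i <;> fin_cases j <;> simp [sigma1, Lam]

theorem Lam_map_conj : Lam.map (starRingEnd ℂ) = Lam := by
  ext i j
  fin_cases i <;> fin_cases j <;> simp [Lam]

/-- `σ₁` intertwines minus the conjugate of the coefficient matrix with parameter `ζ` at the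
reflected point and the coefficient matrix with parameter `-conj ζ`; here `P` is the potential at
the reflected point and `R` the potential at the original one. -/
theorem sigma1_intertwines {P R : Matrix (Fin 2) (Fin 2) ℂ}
    (h : P.map (starRingEnd ℂ) = -(sigma1 * R * sigma1)) (ζ : ℂ) :
    sigma1 * -(((-Complex.I * ζ) • Lam + P).map (starRingEnd ℂ)) =
      ((-Complex.I * (-starRingEnd ℂ ζ)) • Lam + R) * sigma1 := by
  have hmap : ((-Complex.I * ζ) • Lam + P).map (starRingEnd ℂ) =
      (Complex.I * starRingEnd ℂ ζ) • Lam + -(sigma1 * R * sigma1) := by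
    rw [← h]
    conv_rhs => rw [← Lam_map_conj]
    ext i j
    simp
  rw [hmap, neg_add, neg_neg, mul_add, mul_neg, Matrix.mul_smul, sigma1_mul_Lam,
    ← mul_assoc, ← mul_assoc, sigma1_mul_self, one_mul, add_mul, Matrix.smul_mul]
  simp

/-- Reflecting the argument and conjugating: `(conj(Y(-x)))' = -conj(Y'(-x))`. -/
theorem hasDerivAt_conj_reflect {Y : ℝ → Fin 2 → ℂ} {x : ℝ} {Y' : Fin 2 → ℂ}
    (h : HasDerivAt Y Y' (-x)) :
    HasDerivAt (fun x : ℝ => fun i => starRingEnd ℂ (Y (-x) i))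
      (-fun i => starRingEnd ℂ (Y' i)) x := by
  have h₁ := (h.scomp x (hasDerivAt_neg x)).star
  have h₂ : star ((-1 : ℝ) • Y') = -fun i => starRingEnd ℂ (Y' i) := by
    ext i
    simp
  rw [h₂] at h₁
  exact h₁

theorem HasDerivAt.const_mulVec (A : Matrix (Fin 2) (Fin 2) ℂ) {f : ℝ → Fin 2 → ℂ}
    {f' : Fin 2 → ℂ} {x : ℝ} (h : HasDerivAt f f' x) :
    HasDerivAt (fun x => A.mulVec (f x)) (A.mulVec f') x :=
  ((A.mulVecLin.restrictScalars ℝ).toContinuousLinearMap.hasFDerivAt).comp_hasDerivAt x h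

/-- Eigenvalue symmetry for the reverse-space NLS scattering problem: if the potential
satisfies `conj(Q(−x)) = −σ₁ Q(x) σ₁` and `Y` solves `Y′ = (−iζΛ + Q(x))Y`, then
`Ŷ(x) := σ₁ conj(Y(−x))` solves the same problem with spectral parameter `ζ̂ = −conj ζ`. -/
theorem reverse_space_eigenvalue_symmetry (Q : ℝ → Matrix (Fin 2) (Fin 2) ℂ)
    (hQ : ∀ x : ℝ, (Q (-x)).map (starRingEnd ℂ) = -(sigma1 * Q x * sigma1))
    (ζ : ℂ) (Y : ℝ → Fin 2 → ℂ)
    (hY : ∀ x : ℝ, HasDerivAt Y (((-Complex.I * ζ) • Lam + Q x).mulVec (Y x)) x) :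
    ∀ x : ℝ,
      HasDerivAt (fun x : ℝ => sigma1.mulVec fun i => starRingEnd ℂ (Y (-x) i))
        (((-Complex.I * (-starRingEnd ℂ ζ)) • Lam + Q x).mulVec
          (sigma1.mulVec fun i => starRingEnd ℂ (Y (-x) i))) x := by
  intro x
  have h := (hasDerivAt_conj_reflect (hY (-x))).const_mulVec sigma1
  convert h using 1
  have hconj : (fun i => starRingEnd ℂ ((((-Complex.I * ζ) • Lam + Q (-x)).mulVec (Y (-x))) i)) =
      (((-Complex.I * ζ) • Lam + Q (-x)).map (starRingEnd ℂ)).mulVec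
        fun i => starRingEnd ℂ (Y (-x) i) :=
    funext fun i => RingHom.map_mulVec (starRingEnd ℂ) _ _ i
  rw [hconj, ← Matrix.neg_mulVec, Matrix.mulVec_mulVec, Matrix.mulVec_mulVec,
    sigma1_intertwines (hQ x)]
end

section
/- Let σ1 = [[0,1],[1,0]] and Λ = diag(1,−1). Let Q : ℝ → Matrix (Fin 2) (Fin 2) ℂ satisfy conj(Q(−x)) = −σ1 · Q(x) · σ1 for all x ∈ ℝ. Let ζ ∈ ℂ with Im ζ > 0, and let Y : ℝ → (Fin 2 → ℂ) be differentiable with Y′(x) = (−iζΛ + Q(x)) · Y(x) for all x, and suppose there are constants a, b ∈ ℂ such that e^{iζx} Y(x) → (a, 0) as x → −∞ and e^{−iζx} Y(x) → (0, −b) as x → +∞. Set ζ̂ = −conj(ζ) and Ŷ(x) := σ1 · conj(Y(−x)). Then e^{iζ̂x} Ŷ(x) → (−conj(b), 0) as x → −∞ and e^{−iζ̂x} Ŷ(x) → (0, conj(a)) as x → +∞; that is, the scattering constants (â, b̂) of Ŷ satisfy â = −conj(b) and b̂ = −conj(a). -/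
/-! The antilinear map `v ↦ σ₁ conj v` on `ℂ²` is continuous and exchanges the two conjugated
coordinates. Since `conj (∓iζ(−x)) = ±i(−conj ζ)x`, it carries `e^{∓iζ(−x)} Y(−x)` to
`e^{±iζ̂x} Ŷ(x)` with `ζ̂ = −conj ζ`. Each limit of `Ŷ` is therefore the image under this map of
the limit of `Y` at the opposite end of the line. -/

open Matrix Filter

/-- The map `v ↦ σ₁ conj v` conjugates and swaps the two coordinates. -/
theorem sigma1_mulVec_conj (v : Fin 2 → ℂ) :
    (sigma1.mulVec fun i => starRingEnd ℂ (v i)) =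
      ![starRingEnd ℂ (v 1), starRingEnd ℂ (v 0)] := by
  ext i
  fin_cases i <;> simp [sigma1, Matrix.mulVec, dotProduct, Fin.sum_univ_two]

theorem sigma1_mulVec_conj_smul (c : ℂ) (v : Fin 2 → ℂ) :
    (sigma1.mulVec fun i => starRingEnd ℂ ((c • v) i)) =
      starRingEnd ℂ c • sigma1.mulVec fun i => starRingEnd ℂ (v i) := by
  rw [sigma1_mulVec_conj, sigma1_mulVec_conj]; simp

theorem continuous_sigma1_mulVec_conj :
    Continuous fun v : Fin 2 → ℂ => sigma1.mulVec fun i => starRingEnd ℂ (v i) :=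
  continuous_const.matrix_mulVec
    (continuous_pi fun i => Complex.continuous_conj.comp (continuous_apply i))

/-- Eigenvector symmetry for the reverse-space NLS scattering problem: if a bound state `Y`
at `ζ` (`Im ζ > 0`) has scattering constants `(a, b)`, i.e. `e^{iζx}Y(x) → (a,0)` as
`x → −∞` and `e^{−iζx}Y(x) → (0,−b)` as `x → +∞`, then `Ŷ(x) := σ₁ conj(Y(−x))` at
`ζ̂ = −conj ζ` has scattering constants `â = −conj b`, `b̂ = −conj a`. -/
theorem reverse_space_eigenvector_symmetry (Q : ℝ → Matrix (Fin 2) (Fin 2) ℂ)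
    (hQ : ∀ x : ℝ, (Q (-x)).map (starRingEnd ℂ) = -(sigma1 * Q x * sigma1))
    (ζ : ℂ) (hζ : 0 < ζ.im) (Y : ℝ → Fin 2 → ℂ)
    (hY : ∀ x : ℝ, HasDerivAt Y (((-Complex.I * ζ) • Lam + Q x).mulVec (Y x)) x)
    (a b : ℂ)
    (ha : Tendsto (fun x : ℝ => Complex.exp (Complex.I * ζ * (x : ℂ)) • Y x)
      atBot (nhds ![a, 0]))
    (hb : Tendsto (fun x : ℝ => Complex.exp (-(Complex.I * ζ * (x : ℂ))) • Y x)
      atTop (nhds ![0, -b])) :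
    Tendsto
        (fun x : ℝ => Complex.exp (Complex.I * (-starRingEnd ℂ ζ) * (x : ℂ)) •
          sigma1.mulVec fun i => starRingEnd ℂ (Y (-x) i))
        atBot (nhds ![-starRingEnd ℂ b, 0])
      ∧ Tendsto
        (fun x : ℝ => Complex.exp (-(Complex.I * (-starRingEnd ℂ ζ) * (x : ℂ))) •
          sigma1.mulVec fun i => starRingEnd ℂ (Y (-x) i))
        atTop (nhds ![0, starRingEnd ℂ a]) := by
  constructor
  · have h := (continuous_sigma1_mulVec_conj.tendsto _).comp (hb.comp tendsto_neg_atBot_atTop)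
    convert h using 2 with x
    · simp only [Function.comp_apply]
      rw [sigma1_mulVec_conj_smul, ← Complex.exp_conj]
      congr 2
      simp
    · rw [sigma1_mulVec_conj]; simp
  · have h := (continuous_sigma1_mulVec_conj.tendsto _).comp (ha.comp tendsto_neg_atTop_atBot)
    convert h using 2 with x
    · simp only [Function.comp_apply]
      rw [sigma1_mulVec_conj_smul, ← Complex.exp_conj]
      congr 2
      simp
    · rw [sigma1_mulVec_conj]; simp
end

section
/- Let η1 > 0, η̄1 < 0, and θ1, θ̄1 ∈ ℝ, and define q : ℝ × ℝ → ℂ by q(x,t) = 2(η1 − η̄1) e^{2η̄1 x + 4i η̄1² t + i θ̄1} / (1 + e^{−2(η1−η̄1)x − 4i(η1²−η̄1²)t + i(θ1+θ̄1)}). Then at every point (x,t) ∈ ℝ² such that the denominator 1 + e^{−2(η1−η̄1)x − 4i(η1²−η̄1²)t + i(θ1+θ̄1)} is nonzero and the corresponding denominator at (−x,t) is nonzero, q satisfies the reverse-space NLS equation i q_t(x,t) + q_{xx}(x,t) + 2 q(x,t)² conj(q(−x,t)) = 0. -/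
/-- Denominator of the fundamental soliton of the reverse-space NLS equation. -/
noncomputable def solDen (eta1 etabar1 theta1 thetabar1 : ℝ) (x t : ℝ) : ℂ :=
  1 + Complex.exp (-2 * ((eta1 : ℂ) - (etabar1 : ℂ)) * (x : ℂ)
    - 4 * Complex.I * ((eta1 : ℂ) ^ 2 - (etabar1 : ℂ) ^ 2) * (t : ℂ)
    + Complex.I * ((theta1 : ℂ) + (thetabar1 : ℂ)))

/-- The fundamental soliton of the reverse-space NLS equation. -/
noncomputable def solQ (eta1 etabar1 theta1 thetabar1 : ℝ) (x t : ℝ) : ℂ :=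
  2 * ((eta1 : ℂ) - (etabar1 : ℂ)) *
    Complex.exp (2 * (etabar1 : ℂ) * (x : ℂ) + 4 * Complex.I * (etabar1 : ℂ) ^ 2 * (t : ℂ)
      + Complex.I * (thetabar1 : ℂ)) / solDen eta1 etabar1 theta1 thetabar1 x t

/-- The exponential `exp (-2 k x - 4 i k² t + i p)`, a solution of the free Schrödinger equation
`i w_t = w_xx`. The soliton denominator is a sum of two of these. -/
noncomputable def solWave (k p x t : ℝ) : ℂ :=
  Complex.exp (-2 * (k : ℂ) * (x : ℂ) - 4 * Complex.I * (k : ℂ) ^ 2 * (t : ℂ)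
    + Complex.I * (p : ℂ))

lemma solWave_ne_zero (k p x t : ℝ) : solWave k p x t ≠ 0 := Complex.exp_ne_zero _

lemma solWave_hasDerivAt_x (k p x t : ℝ) :
    HasDerivAt (fun s : ℝ => solWave k p s t) (-2 * (k : ℂ) * solWave k p x t) x := by
  have h := (((((Complex.ofRealCLM.hasDerivAt (x := x)).const_mul (-2 * (k : ℂ))).sub_const
    (4 * Complex.I * (k : ℂ) ^ 2 * (t : ℂ))).add_const (Complex.I * (p : ℂ))).cexp)
  refine h.congr_deriv ?_
  simp [solWave]
  ring

lemma solWave_hasDerivAt_t (k p x t : ℝ) :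
    HasDerivAt (fun s : ℝ => solWave k p x s)
      (-4 * Complex.I * (k : ℂ) ^ 2 * solWave k p x t) t := by
  have h := (((((Complex.ofRealCLM.hasDerivAt (x := t)).const_mul
    (4 * Complex.I * (k : ℂ) ^ 2)).const_sub
    (-2 * (k : ℂ) * (x : ℂ))).add_const (Complex.I * (p : ℂ))).cexp)
  refine h.congr_deriv ?_
  simp [solWave]
  ring

lemma solWave_conj_neg (k p x t : ℝ) :
    starRingEnd ℂ (solWave k p (-x) t) = (solWave k p x t)⁻¹ := by
  unfold solWave
  rw [← Complex.exp_conj, ← Complex.exp_neg]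
  congr 1
  simp [map_ofNat]
  ring

lemma solDen_eq (a b θ φ x t : ℝ) :
    solDen a b θ φ x t
      = (solWave b (-φ) x t)⁻¹ * (solWave b (-φ) x t + solWave a θ x t) := by
  rw [mul_add, inv_mul_cancel₀ (solWave_ne_zero _ _ _ _)]
  unfold solWave solDen
  rw [← Complex.exp_neg, ← Complex.exp_add]
  congr 2
  push_cast
  ring

/-- No non-vanishing is required: where the denominator vanishes, both sides are `0`. -/
lemma solQ_eq (a b θ φ x t : ℝ) :
    solQ a b θ φ x t
      = 2 * ((a : ℂ) - b) / (solWave b (-φ) x t + solWave a θ x t) := by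
  have h : Complex.exp (2 * (b : ℂ) * (x : ℂ) + 4 * Complex.I * (b : ℂ) ^ 2 * (t : ℂ)
      + Complex.I * (φ : ℂ)) = (solWave b (-φ) x t)⁻¹ := by
    unfold solWave
    rw [← Complex.exp_neg]
    congr 1
    push_cast
    ring
  unfold solQ
  rw [h, solDen_eq, mul_comm (2 * ((a : ℂ) - b)),
    mul_div_mul_left _ _ (inv_ne_zero (solWave_ne_zero _ _ _ _))]

/-- The fundamental soliton satisfies the reverse-space NLS equation
`i qₜ + qₓₓ + 2 q² conj(q(−x,t)) = 0` at every point where the denominators at `(x,t)`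
and `(−x,t)` are nonzero. -/
theorem fundamental_soliton_reverse_space (eta1 etabar1 theta1 thetabar1 : ℝ)
    (heta1 : 0 < eta1) (hetabar1 : etabar1 < 0)
    (q : ℝ × ℝ → ℂ)
    (hq : ∀ x t : ℝ, q (x, t) = solQ eta1 etabar1 theta1 thetabar1 x t) :
    ∀ x t : ℝ, solDen eta1 etabar1 theta1 thetabar1 x t ≠ 0 →
      solDen eta1 etabar1 theta1 thetabar1 (-x) t ≠ 0 →
      Complex.I * pdt q x t + pdxx q x t
        + 2 * q (x, t) ^ 2 * starRingEnd ℂ (q (-x, t)) = 0 := by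
  intro x t hx _
  set A : ℝ → ℝ → ℂ := solWave etabar1 (-thetabar1) with hA
  set G : ℝ → ℝ → ℂ := solWave eta1 theta1 with hG
  set a : ℂ := (eta1 : ℂ) with ha
  set b : ℂ := (etabar1 : ℂ) with hb
  have hq' : ∀ x t : ℝ, q (x, t) = 2 * (a - b) / (A x t + G x t) :=
    fun x t => (hq x t).trans (solQ_eq _ _ _ _ _ _)
  have hD : A x t + G x t ≠ 0 := by
    rw [solDen_eq] at hx
    exact right_ne_zero_of_mul hx
  have hAx : ∀ s, HasDerivAt (fun s : ℝ => A s t) (-2 * b * A s t) s :=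
    fun s => solWave_hasDerivAt_x _ _ _ _
  have hGx : ∀ s, HasDerivAt (fun s : ℝ => G s t) (-2 * a * G s t) s :=
    fun s => solWave_hasDerivAt_x _ _ _ _
  have hDt : HasDerivAt (fun s : ℝ => A x s + G x s)
      (-4 * Complex.I * b ^ 2 * A x t + -4 * Complex.I * a ^ 2 * G x t) t :=
    (solWave_hasDerivAt_t _ _ _ _).add (solWave_hasDerivAt_t _ _ _ _)
  have hDx : ∀ s, HasDerivAt (fun s : ℝ => A s t + G s t)
      (-2 * b * A s t + -2 * a * G s t) s := fun s => (hAx s).add (hGx s)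
  have ht : pdt q x t = -(2 * (a - b)) *
      (-4 * Complex.I * b ^ 2 * A x t + -4 * Complex.I * a ^ 2 * G x t)
        / (A x t + G x t) ^ 2 := by
    unfold pdt
    simp only [hq']
    refine (((hasDerivAt_const t (2 * (a - b))).div hDt hD).congr_deriv ?_).deriv
    ring
  have hx1 : ∀ s, A s t + G s t ≠ 0 → pdx q s t =
      -(2 * (a - b)) * (-2 * b * A s t + -2 * a * G s t) / (A s t + G s t) ^ 2 := by
    intro s hs
    unfold pdx
    simp only [hq']
    refine (((hasDerivAt_const s (2 * (a - b))).div (hDx s) hs).congr_deriv ?_).deriv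
    ring
  -- The formula for `q_x` may be differentiated because it holds near `x`, not only at `x`.
  have hev : (fun s : ℝ => pdx q s t) =ᶠ[nhds x] fun s =>
      -(2 * (a - b)) * (-2 * b * A s t + -2 * a * G s t) / (A s t + G s t) ^ 2 := by
    filter_upwards [(hDx x).continuousAt.eventually_ne hD] with s hs using hx1 s hs
  have hxx : pdxx q x t =
      -(2 * (a - b)) * (4 * b ^ 2 * A x t + 4 * a ^ 2 * G x t) / (A x t + G x t) ^ 2
        + 2 * (2 * (a - b)) * (-2 * b * A x t + -2 * a * G x t) ^ 2 / (A x t + G x t) ^ 3 := by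
    unfold pdxx
    rw [hev.deriv_eq]
    refine ((((((hAx x).const_mul (-2 * b)).add ((hGx x).const_mul (-2 * a))).const_mul
      (-(2 * (a - b)))).div ((hDx x).pow 2) (pow_ne_zero 2 hD)).congr_deriv ?_).deriv
    simp only [Pi.add_apply, Pi.pow_apply]
    field_simp
    ring
  have hA0 : A x t ≠ 0 := solWave_ne_zero _ _ _ _
  have hG0 : G x t ≠ 0 := solWave_ne_zero _ _ _ _
  have hconj : starRingEnd ℂ (q (-x, t)) =
      2 * (a - b) * (A x t * G x t) / (A x t + G x t) := by
    have h1 : starRingEnd ℂ (A (-x) t) = (A x t)⁻¹ := solWave_conj_neg _ _ _ _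
    have h2 : starRingEnd ℂ (G (-x) t) = (G x t)⁻¹ := solWave_conj_neg _ _ _ _
    have h3 : starRingEnd ℂ a = a := Complex.conj_ofReal _
    have h4 : starRingEnd ℂ b = b := Complex.conj_ofReal _
    rw [hq', map_div₀, map_mul, map_sub, map_add, h1, h2, h3, h4, inv_add_inv hA0 hG0,
      div_div_eq_mul_div, map_ofNat]
  rw [ht, hxx, hconj, hq']
  generalize A x t = A at *
  generalize G x t = G at *
  field_simp
  ring_nf
  simp only [Complex.I_sq]
  ring
end

section
/- Let η1 > 0, η̄1 < 0 with η̄1 ≠ −η1, and θ1, θ̄1 ∈ ℝ. Define D : ℝ → ℂ by D(t) = 1 + e^{−4i(η1²−η̄1²)t + i(θ1+θ̄1)}, the denominator at x = 0 of the fundamental soliton q(x,t) = 2(η1−η̄1) e^{2η̄1 x + 4iη̄1² t + iθ̄1}/(1 + e^{−2(η1−η̄1)x − 4i(η1²−η̄1²)t + i(θ1+θ̄1)}) of the reverse-space NLS equation. Then D(t) = 0 if and only if there exists n ∈ ℤ with t = (θ1 + θ̄1 − (2n+1)π)/(4(η1² − η̄1²)). In particular, the set of such collapse times is an infinite arithmetic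 progression with consecutive spacing π/(2|η1² − η̄1²|). -/
/-!
At `x = 0` the exponent of the soliton denominator is `i φ(t)` with the real phase
`φ(t) = θ₁ + θ̄₁ - 4 (η₁² - η̄₁²) t`, so the denominator vanishes exactly when `e^{iφ(t)} = -1`,
that is, when `φ(t)` is an odd multiple of `π` (`solD_eq_zero_iff`). The sign conditions and
`η̄₁ ≠ -η₁` make `η₁² - η̄₁²` nonzero, so `φ` is an affine bijection of `ℝ`, which turns the odd
multiples of `π` into an infinite arithmetic progression of times. Advancing time by
`π / (2 |η₁² - η̄₁²|)` shifts `φ` by `-2π` or `+2π`, according to the sign of `η₁² - η̄₁²`, which is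
the gap between neighbouring odd multiples of `π`.
-/

/-- The denominator at `x = 0` of the fundamental soliton of the reverse-space NLS
equation: `D(t) = 1 + e^{−4i(η₁²−η̄₁²)t + i(θ₁+θ̄₁)}`. -/
noncomputable def solD (eta1 etabar1 theta1 thetabar1 : ℝ) (t : ℝ) : ℂ :=
  1 + Complex.exp (-4 * Complex.I * ((eta1 : ℂ) ^ 2 - (etabar1 : ℂ) ^ 2) * (t : ℂ)
    + Complex.I * ((theta1 : ℂ) + (thetabar1 : ℂ)))

theorem solD_eq_zero_iff (a b c d t : ℝ) :
    solD a b c d t = 0 ↔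
      ∃ n : ℤ, c + d - 4 * (a ^ 2 - b ^ 2) * t = (2 * (n : ℝ) + 1) * Real.pi := by
  have hphase : solD a b c d t =
      1 + Complex.exp (((c + d - 4 * (a ^ 2 - b ^ 2) * t : ℝ) : ℂ) * Complex.I) := by
    unfold solD
    congr 2
    push_cast
    ring
  rw [hphase, add_comm, add_eq_zero_iff_eq_neg, ← Complex.exp_pi_mul_I,
    Complex.exp_eq_exp_iff_exists_int]
  refine exists_congr fun n => ?_
  have hfactor : (Real.pi : ℂ) * Complex.I + n * (2 * Real.pi * Complex.I) =
      (((2 * (n : ℝ) + 1) * Real.pi : ℝ) : ℂ) * Complex.I := by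
    push_cast
    ring
  rw [hfactor, mul_left_inj' Complex.I_ne_zero, Complex.ofReal_inj]

/-- Collapse times of the fundamental soliton of the reverse-space NLS equation: when
`η̄₁ ≠ −η₁`, the denominator at `x = 0` vanishes exactly at the times
`t = (θ₁ + θ̄₁ − (2n+1)π)/(4(η₁² − η̄₁²))`, `n ∈ ℤ`; this set of collapse times is
infinite and forms an arithmetic progression with consecutive spacing
`π/(2|η₁² − η̄₁²|)`. -/
theorem fundamental_soliton_collapse_times (eta1 etabar1 theta1 thetabar1 : ℝ)
    (heta1 : 0 < eta1) (hetabar1 : etabar1 < 0) (hne : etabar1 ≠ -eta1) :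
    (∀ t : ℝ, solD eta1 etabar1 theta1 thetabar1 t = 0 ↔
      ∃ n : ℤ, t = (theta1 + thetabar1 - (2 * (n : ℝ) + 1) * Real.pi)
        / (4 * (eta1 ^ 2 - etabar1 ^ 2)))
    ∧ {t : ℝ | solD eta1 etabar1 theta1 thetabar1 t = 0}.Infinite
    ∧ (∀ t : ℝ, solD eta1 etabar1 theta1 thetabar1 t = 0 →
        solD eta1 etabar1 theta1 thetabar1
            (t + Real.pi / (2 * |eta1 ^ 2 - etabar1 ^ 2|)) = 0
          ∧ ∀ s : ℝ, t < s → s < t + Real.pi / (2 * |eta1 ^ 2 - etabar1 ^ 2|) →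
            solD eta1 etabar1 theta1 thetabar1 s ≠ 0) := by
  have hδ : eta1 ^ 2 - etabar1 ^ 2 ≠ 0 := by
    rw [sq_sub_sq]
    exact mul_ne_zero (fun h => hne (by linarith)) (by linarith)
  have hpi := Real.pi_pos
  have htimes : ∀ t : ℝ, solD eta1 etabar1 theta1 thetabar1 t = 0 ↔
      ∃ n : ℤ, t = (theta1 + thetabar1 - (2 * (n : ℝ) + 1) * Real.pi)
        / (4 * (eta1 ^ 2 - etabar1 ^ 2)) := by
    intro t
    rw [solD_eq_zero_iff]
    refine exists_congr fun n => ?_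
    rw [eq_div_iff (mul_ne_zero four_ne_zero hδ)]
    constructor <;> intro h <;> linarith
  refine ⟨htimes, ?_, ?_⟩
  · refine (Set.infinite_range_of_injective (f := fun n : ℤ =>
      (theta1 + thetabar1 - (2 * (n : ℝ) + 1) * Real.pi)
        / (4 * (eta1 ^ 2 - etabar1 ^ 2))) ?_).mono ?_
    · intro m n hmn
      have h := (div_left_inj' (mul_ne_zero four_ne_zero hδ)).1 hmn
      have h' : (2 * (m : ℝ) + 1) = 2 * (n : ℝ) + 1 :=
        mul_right_cancel₀ hpi.ne' (by linarith)
      exact_mod_cast (by linarith : (m : ℝ) = n)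
    · rintro _ ⟨n, rfl⟩
      exact (htimes _).2 ⟨n, rfl⟩
  · simp only [ne_eq, solD_eq_zero_iff]
    generalize eta1 ^ 2 - etabar1 ^ 2 = δ at hδ
    rintro t ⟨n, hn⟩
    -- Two odd multiples of `π` cannot differ by strictly less than `2π`.
    have hgap : ∀ k : ℤ, 0 < 2 * (k : ℝ) * Real.pi → 2 * (k : ℝ) * Real.pi < 2 * Real.pi →
        False := by
      intro k h0 h1
      have h0' : (0 : ℝ) < k := by
        by_contra! h
        nlinarith
      have h1' : (k : ℝ) < 1 := by
        by_contra! h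
        nlinarith
      norm_cast at h0' h1'
      omega
    rcases hδ.lt_or_gt with hneg | hpos
    · rw [abs_of_neg hneg]
      have hstep : 4 * δ * (Real.pi / (2 * -δ)) = -(2 * Real.pi) := by
        field_simp
        ring
      refine ⟨⟨n + 1, ?_⟩, ?_⟩
      · push_cast
        linarith
      · rintro s hts hst ⟨m, hm⟩
        have h1 := mul_lt_mul_of_neg_left hts (by linarith : 4 * δ < 0)
        have h2 := mul_lt_mul_of_neg_left hst (by linarith : 4 * δ < 0)
        refine hgap (m - n) ?_ ?_ <;> push_cast <;> linarith
    · rw [abs_of_pos hpos]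
      have hstep : 4 * δ * (Real.pi / (2 * δ)) = 2 * Real.pi := by
        field_simp
        ring
      refine ⟨⟨n - 1, ?_⟩, ?_⟩
      · push_cast
        linarith
      · rintro s hts hst ⟨m, hm⟩
        have h1 := mul_lt_mul_of_pos_left hts (by linarith : 0 < 4 * δ)
        have h2 := mul_lt_mul_of_pos_left hst (by linarith : 0 < 4 * δ)
        refine hgap (n - m) ?_ ?_ <;> push_cast <;> linarith
end

section
/- Let ζ1 ∈ ℂ with Im ζ1 > 0 and let b1 ∈ ℂ with b1 ≠ 0. Define q : ℝ × ℝ → ℂ by q(x,t) = −4i ζ1 b1 e^{−4iζ1² t} / (e^{−2iζ1 x} + b1² e^{2iζ1 x}). Then at every point (x,t) ∈ ℝ² such that the denominator e^{−2iζ1 x} + b1² e^{2iζ1 x} is nonzero, q satisfies the reverse-time NLS equation i q_t(x,t) + q_{xx}(x,t) + 2 q(x,t)² q(x,−t) = 0. -/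
/-- The denominator of the fundamental soliton of the reverse-time NLS equation. -/
noncomputable def rtDen (zeta1 b1 : ℂ) (x : ℝ) : ℂ :=
  Complex.exp (-2 * Complex.I * zeta1 * (x : ℂ))
    + b1 ^ 2 * Complex.exp (2 * Complex.I * zeta1 * (x : ℂ))

/-- The fundamental soliton of the reverse-time NLS equation. -/
noncomputable def rtQ (zeta1 b1 : ℂ) (x t : ℝ) : ℂ :=
  -4 * Complex.I * zeta1 * b1 * Complex.exp (-4 * Complex.I * zeta1 ^ 2 * (t : ℂ))
    / rtDen zeta1 b1 x

/-- The derivative of `rtDen` in `x`. -/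
noncomputable def rtDenDeriv (zeta1 b1 : ℂ) (x : ℝ) : ℂ :=
  2 * Complex.I * zeta1 * (b1 ^ 2 * Complex.exp (2 * Complex.I * zeta1 * (x : ℂ))
    - Complex.exp (-2 * Complex.I * zeta1 * (x : ℂ)))

lemma hasDerivAt_exp_mul_ofReal (c : ℂ) (x : ℝ) :
    HasDerivAt (fun s : ℝ => Complex.exp (c * (s : ℂ))) (Complex.exp (c * (x : ℂ)) * c) x := by
  have h : HasDerivAt (fun s : ℝ => c * (s : ℂ)) c x := by
    simpa using (Complex.ofRealCLM.hasDerivAt (x := x)).const_mul c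
  exact h.cexp

lemma hasDerivAt_rtDen (zeta1 b1 : ℂ) (x : ℝ) :
    HasDerivAt (rtDen zeta1 b1) (rtDenDeriv zeta1 b1 x) x := by
  have h := (hasDerivAt_exp_mul_ofReal (-2 * Complex.I * zeta1) x).add
    ((hasDerivAt_exp_mul_ofReal (2 * Complex.I * zeta1) x).const_mul (b1 ^ 2))
  refine h.congr_deriv ?_
  unfold rtDenDeriv
  ring

lemma hasDerivAt_rtDenDeriv (zeta1 b1 : ℂ) (x : ℝ) :
    HasDerivAt (rtDenDeriv zeta1 b1) (-4 * zeta1 ^ 2 * rtDen zeta1 b1 x) x := by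
  have h := (((hasDerivAt_exp_mul_ofReal (2 * Complex.I * zeta1) x).const_mul (b1 ^ 2)).sub
    (hasDerivAt_exp_mul_ofReal (-2 * Complex.I * zeta1) x)).const_mul (2 * Complex.I * zeta1)
  refine h.congr_deriv ?_
  unfold rtDen
  linear_combination (4 * zeta1 ^ 2 * (Complex.exp (-2 * Complex.I * zeta1 * (x : ℂ))
    + b1 ^ 2 * Complex.exp (2 * Complex.I * zeta1 * (x : ℂ)))) * Complex.I_sq

/-- The conserved quantity of the oscillator equation `D'' = -4 ζ₁² D`. -/
lemma rtDenDeriv_sq (zeta1 b1 : ℂ) (x : ℝ) :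
    rtDenDeriv zeta1 b1 x ^ 2 = 16 * zeta1 ^ 2 * b1 ^ 2 - 4 * zeta1 ^ 2 * rtDen zeta1 b1 x ^ 2 := by
  have h : Complex.exp (-2 * Complex.I * zeta1 * (x : ℂ))
      * Complex.exp (2 * Complex.I * zeta1 * (x : ℂ)) = 1 := by
    rw [← Complex.exp_add, ← Complex.exp_zero]
    congr 1
    ring
  unfold rtDenDeriv rtDen
  set E := Complex.exp (-2 * Complex.I * zeta1 * (x : ℂ))
  set F := Complex.exp (2 * Complex.I * zeta1 * (x : ℂ))
  linear_combination (4 * zeta1 ^ 2 * (b1 ^ 2 * F - E) ^ 2) * Complex.I_sq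
    + 16 * zeta1 ^ 2 * b1 ^ 2 * h

lemma hasDerivAt_const_div_rtDen (zeta1 b1 A : ℂ) (x : ℝ) (hx : rtDen zeta1 b1 x ≠ 0) :
    HasDerivAt (fun s : ℝ => A / rtDen zeta1 b1 s)
      (-A * rtDenDeriv zeta1 b1 x / rtDen zeta1 b1 x ^ 2) x := by
  refine ((hasDerivAt_const x A).div (hasDerivAt_rtDen zeta1 b1 x) hx).congr_deriv ?_
  ring

lemma deriv_deriv_const_div_rtDen (zeta1 b1 A : ℂ) (x : ℝ) (hx : rtDen zeta1 b1 x ≠ 0) :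
    deriv (fun s : ℝ => deriv (fun r : ℝ => A / rtDen zeta1 b1 r) s) x
      = -4 * zeta1 ^ 2 * A / rtDen zeta1 b1 x
        + 32 * zeta1 ^ 2 * b1 ^ 2 * A / rtDen zeta1 b1 x ^ 3 := by
  -- The formula for the first derivative is needed on a neighbourhood of `x`, where `D` stays nonzero.
  have hev : (fun s : ℝ => deriv (fun r : ℝ => A / rtDen zeta1 b1 r) s) =ᶠ[nhds x]
      fun s => -A * rtDenDeriv zeta1 b1 s / rtDen zeta1 b1 s ^ 2 := by
    filter_upwards [(hasDerivAt_rtDen zeta1 b1 x).continuousAt.eventually_ne hx] with s hs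
    exact (hasDerivAt_const_div_rtDen zeta1 b1 A s hs).deriv
  rw [hev.deriv_eq]
  have h := ((hasDerivAt_rtDenDeriv zeta1 b1 x).const_mul (-A)).div
    ((hasDerivAt_rtDen zeta1 b1 x).pow 2) (pow_ne_zero 2 hx)
  refine h.deriv.trans ?_
  have hsq := rtDenDeriv_sq zeta1 b1 x
  simp only [Pi.pow_apply]
  field_simp
  push_cast
  linear_combination (2 * A * rtDen zeta1 b1 x) * hsq

/-- The fundamental soliton `q(x,t) = −4iζ₁b₁e^{−4iζ₁²t}/(e^{−2iζ₁x} + b₁²e^{2iζ₁x})`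
satisfies the reverse-time NLS equation `i qₜ + qₓₓ + 2 q(x,t)² q(x,−t) = 0` at every
point where the denominator is nonzero. -/
theorem fundamental_soliton_reverse_time (zeta1 b1 : ℂ)
    (hzeta1 : 0 < zeta1.im) (hb1 : b1 ≠ 0)
    (q : ℝ × ℝ → ℂ)
    (hq : ∀ x t : ℝ, q (x, t) = rtQ zeta1 b1 x t) :
    ∀ x t : ℝ, rtDen zeta1 b1 x ≠ 0 →
      Complex.I * pdt q x t + pdxx q x t + 2 * q (x, t) ^ 2 * q (x, -t) = 0 := by
  intro x t hx
  have ht : pdt q x t = -4 * Complex.I * zeta1 ^ 2 * rtQ zeta1 b1 x t := by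
    unfold pdt
    simp only [hq]
    have h := ((hasDerivAt_exp_mul_ofReal (-4 * Complex.I * zeta1 ^ 2) t).const_mul
      (-4 * Complex.I * zeta1 * b1)).div_const (rtDen zeta1 b1 x)
    refine h.deriv.trans ?_
    unfold rtQ
    ring
  have hxx : pdxx q x t = -4 * zeta1 ^ 2 * rtQ zeta1 b1 x t
      + 32 * zeta1 ^ 2 * b1 ^ 2 * rtQ zeta1 b1 x t / rtDen zeta1 b1 x ^ 2 := by
    unfold pdxx pdx
    simp only [hq]
    refine (deriv_deriv_const_div_rtDen zeta1 b1 _ x hx).trans ?_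
    unfold rtQ
    field_simp
  have hprod : rtQ zeta1 b1 x t * rtQ zeta1 b1 x (-t)
      = -16 * zeta1 ^ 2 * b1 ^ 2 / rtDen zeta1 b1 x ^ 2 := by
    have h : Complex.exp (-4 * Complex.I * zeta1 ^ 2 * (t : ℂ))
        * Complex.exp (-4 * Complex.I * zeta1 ^ 2 * ((-t : ℝ) : ℂ)) = 1 := by
      rw [← Complex.exp_add, ← Complex.exp_zero]
      congr 1
      push_cast
      ring
    unfold rtQ
    rw [div_mul_div_comm, ← sq]
    congr 1
    linear_combination (16 * Complex.I ^ 2 * zeta1 ^ 2 * b1 ^ 2) * h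
      + 16 * zeta1 ^ 2 * b1 ^ 2 * Complex.I_sq
  rw [ht, hxx, hq, hq]
  linear_combination (2 * rtQ zeta1 b1 x t) * hprod
    - 4 * zeta1 ^ 2 * rtQ zeta1 b1 x t * Complex.I_sq
end

section
/- Let ζ1, ζ̄1 ∈ ℂ with Im ζ1 > 0 and Im ζ̄1 < 0, and let ω1, ω̄1 ∈ {1, −1}. Define q : ℝ × ℝ → ℂ by q(x,t) = 2i(ζ̄1 − ζ1) ω̄1 e^{−2iζ̄1 x − 4iζ̄1² t} / (1 + ω1 ω̄1 e^{−2i(ζ̄1−ζ1)x − 4i(ζ̄1²−ζ1²)t}). Then at every point (x,t) ∈ ℝ² such that the denominator 1 + ω1ω̄1 e^{−2i(ζ̄1−ζ1)x − 4i(ζ̄1²−ζ1²)t} is nonzero and the corresponding denominator at (−x,−t) is nonzero, q satisfies the reverse-space-time NLS equation i q_t(x,t) + q_{xx}(x,t) + 2 q(x,t)² q(−x,−t) = 0. -/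
/-- The denominator of the fundamental soliton of the reverse-space-time NLS equation. -/
noncomputable def rxtDen (zeta1 zetabar1 omega1 omegabar1 : ℂ) (x t : ℝ) : ℂ :=
  1 + omega1 * omegabar1 *
    Complex.exp (-2 * Complex.I * (zetabar1 - zeta1) * (x : ℂ)
      - 4 * Complex.I * (zetabar1 ^ 2 - zeta1 ^ 2) * (t : ℂ))

/-- The fundamental soliton of the reverse-space-time NLS equation. -/
noncomputable def rxtQ (zeta1 zetabar1 omega1 omegabar1 : ℂ) (x t : ℝ) : ℂ :=
  2 * Complex.I * (zetabar1 - zeta1) * omegabar1 *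
    Complex.exp (-2 * Complex.I * zetabar1 * (x : ℂ)
      - 4 * Complex.I * zetabar1 ^ 2 * (t : ℂ))
    / rxtDen zeta1 zetabar1 omega1 omegabar1 x t

/-- Both exponential factors of the soliton restrict to functions of this shape on the lines
parallel to the axes, so this single derivative serves both variables. -/
lemma hasDerivAt_cexp_affine (a b : ℂ) (s : ℝ) :
    HasDerivAt (fun s : ℝ => Complex.exp (a * (s : ℂ) + b))
      (a * Complex.exp (a * (s : ℂ) + b)) s := by
  have h1 : HasDerivAt (fun s : ℝ => a * (s : ℂ) + b) a s := by
    simpa using ((Complex.ofRealCLM.hasDerivAt (x := s)).const_mul a).add_const b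
  simpa [mul_comm] using h1.cexp

lemma hasDerivAt_solitonDen (σ c d : ℂ) (s : ℝ) :
    HasDerivAt (fun s : ℝ => 1 + σ * Complex.exp (c * (s : ℂ) + d))
      (σ * (c * Complex.exp (c * (s : ℂ) + d))) s :=
  ((hasDerivAt_cexp_affine c d s).const_mul σ).const_add 1

lemma hasDerivAt_soliton (C σ a b c d : ℂ) (s : ℝ)
    (h : 1 + σ * Complex.exp (c * (s : ℂ) + d) ≠ 0) :
    HasDerivAt (fun s : ℝ => C * Complex.exp (a * (s : ℂ) + b) /
        (1 + σ * Complex.exp (c * (s : ℂ) + d)))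
      (C * Complex.exp (a * (s : ℂ) + b) *
        (a * (1 + σ * Complex.exp (c * (s : ℂ) + d)) - σ * c * Complex.exp (c * (s : ℂ) + d)) /
        (1 + σ * Complex.exp (c * (s : ℂ) + d)) ^ 2) s := by
  refine (((hasDerivAt_cexp_affine a b s).const_mul C).div
    (hasDerivAt_solitonDen σ c d s) h).congr_deriv ?_
  ring

/-- The first-derivative formula is only valid off the zeros of the denominator; since that set is
open, it holds near `s` and can be differentiated once more. -/
lemma deriv_deriv_soliton (C σ a b c d : ℂ) (s : ℝ)
    (h : 1 + σ * Complex.exp (c * (s : ℂ) + d) ≠ 0) :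
    deriv (fun r : ℝ => deriv (fun s : ℝ => C * Complex.exp (a * (s : ℂ) + b) /
        (1 + σ * Complex.exp (c * (s : ℂ) + d))) r) s =
      C * Complex.exp (a * (s : ℂ) + b) *
        (a ^ 2 / (1 + σ * Complex.exp (c * (s : ℂ) + d))
          - (2 * a * c + c ^ 2) * σ * Complex.exp (c * (s : ℂ) + d) /
            (1 + σ * Complex.exp (c * (s : ℂ) + d)) ^ 2
          + 2 * c ^ 2 * (σ * Complex.exp (c * (s : ℂ) + d)) ^ 2 /
            (1 + σ * Complex.exp (c * (s : ℂ) + d)) ^ 3) := by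
  have hev : ∀ᶠ r : ℝ in nhds s, 1 + σ * Complex.exp (c * (r : ℂ) + d) ≠ 0 :=
    (hasDerivAt_solitonDen σ c d s).continuousAt.eventually_ne h
  have heq := hev.mono fun r hr => (hasDerivAt_soliton C σ a b c d r hr).deriv
  rw [Filter.EventuallyEq.deriv_eq heq]
  have hE := (hasDerivAt_cexp_affine a b s).const_mul C
  have hF := hasDerivAt_cexp_affine c d s
  have hD := hasDerivAt_solitonDen σ c d s
  have key := (hE.mul ((hD.const_mul a).sub (hF.const_mul (σ * c)))).div (hD.pow 2)
    (pow_ne_zero 2 h)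
  refine key.deriv.trans ?_
  simp only [Pi.mul_apply, Pi.sub_apply, Pi.pow_apply, Nat.cast_ofNat]
  generalize Complex.exp (c * (s : ℂ) + d) = F at *
  generalize Complex.exp (a * (s : ℂ) + b) = E at *
  field_simp
  ring

/-- The equation with the derivative formulas substituted: `E`, `F` stand for the values of the two
exponentials at `(x, t)`, and `E⁻¹`, `F⁻¹` for those at `(-x, -t)`. -/
lemma soliton_identity (z w o p E F : ℂ) (ho : o ^ 2 = 1) (hp : p ^ 2 = 1)
    (hE : E ≠ 0) (hF : F ≠ 0) (h : 1 + o * p * F ≠ 0) (h' : 1 + o * p * F⁻¹ ≠ 0) :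
    Complex.I * (2 * Complex.I * (w - z) * p * E *
        ((-4 * Complex.I * w ^ 2) * (1 + o * p * F)
          - o * p * (-4 * Complex.I * (w ^ 2 - z ^ 2)) * F) / (1 + o * p * F) ^ 2)
      + 2 * Complex.I * (w - z) * p * E *
        ((-2 * Complex.I * w) ^ 2 / (1 + o * p * F)
          - (2 * (-2 * Complex.I * w) * (-2 * Complex.I * (w - z))
              + (-2 * Complex.I * (w - z)) ^ 2) * (o * p) * F / (1 + o * p * F) ^ 2
          + 2 * (-2 * Complex.I * (w - z)) ^ 2 * (o * p * F) ^ 2 / (1 + o * p * F) ^ 3)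
      + 2 * (2 * Complex.I * (w - z) * p * E / (1 + o * p * F)) ^ 2
        * (2 * Complex.I * (w - z) * p * E⁻¹ / (1 + o * p * F⁻¹)) = 0 := by
  have hop : (o * p) ^ 2 = 1 := by rw [mul_pow, ho, hp, one_mul]
  -- Reflection turns the denominator `D` into `o * p * D / F`, because `(o * p)⁻¹ = o * p`.
  have hrefl : E⁻¹ / (1 + o * p * F⁻¹) = o * p * F * E⁻¹ / (1 + o * p * F) := by
    rw [div_eq_div_iff h' h]
    field_simp
    linear_combination -hop
  have hq : 2 * Complex.I * (w - z) * p * E⁻¹ / (1 + o * p * F⁻¹)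
      = 2 * Complex.I * (w - z) * p * (o * p * F * E⁻¹ / (1 + o * p * F)) := by
    rw [← hrefl]; ring
  rw [hq]
  generalize hs : o * p = σ at *
  have hD : (1 + σ * F) ≠ 0 := h
  -- With `σ * F = D - 1` eliminated, what is left is polynomial in `D` after clearing `D`.
  generalize hDd : 1 + σ * F = D at *
  have hσF : σ * F = D - 1 := by rw [← hDd]; ring
  have e1 : ∀ u : ℂ, σ * u * F = (D - 1) * u := fun u => by rw [← hσF]; ring
  have e2 : ∀ u : ℂ, u * σ * F = (D - 1) * u := fun u => by rw [← hσF]; ring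
  rw [hσF, e1, e2]
  field_simp
  ring_nf
  have hI3 : Complex.I ^ 3 = -Complex.I := Complex.I_pow_three
  simp only [hI3]
  linear_combination 16 * Complex.I * p * E * (1 - D) * (w - z) ^ 3 * hp

/-- The fundamental soliton satisfies the reverse-space-time NLS equation
`i qₜ + qₓₓ + 2 q(x,t)² q(−x,−t) = 0` at every point where the denominators at `(x,t)`
and `(−x,−t)` are nonzero. -/
theorem fundamental_soliton_reverse_space_time (zeta1 zetabar1 omega1 omegabar1 : ℂ)
    (hzeta1 : 0 < zeta1.im) (hzetabar1 : zetabar1.im < 0)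
    (homega1 : omega1 = 1 ∨ omega1 = -1) (homegabar1 : omegabar1 = 1 ∨ omegabar1 = -1)
    (q : ℝ × ℝ → ℂ)
    (hq : ∀ x t : ℝ, q (x, t) = rxtQ zeta1 zetabar1 omega1 omegabar1 x t) :
    ∀ x t : ℝ, rxtDen zeta1 zetabar1 omega1 omegabar1 x t ≠ 0 →
      rxtDen zeta1 zetabar1 omega1 omegabar1 (-x) (-t) ≠ 0 →
      Complex.I * pdt q x t + pdxx q x t + 2 * q (x, t) ^ 2 * q (-x, -t) = 0 := by
  intro x t hD hD'
  have ho : omega1 ^ 2 = 1 := by rcases homega1 with h | h <;> simp [h]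
  have hp : omegabar1 ^ 2 = 1 := by rcases homegabar1 with h | h <;> simp [h]
  obtain rfl : q = fun y => rxtQ zeta1 zetabar1 omega1 omegabar1 y.1 y.2 :=
    funext fun y => hq y.1 y.2
  clear hq
  set z := zeta1
  set w := zetabar1
  set o := omega1
  set p := omegabar1
  have hx : ∀ s u : ℝ, rxtQ z w o p s u = 2 * Complex.I * (w - z) * p *
      Complex.exp ((-2 * Complex.I * w) * (s : ℂ) + (-4 * Complex.I * w ^ 2) * (u : ℂ)) /
      (1 + o * p * Complex.exp ((-2 * Complex.I * (w - z)) * (s : ℂ)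
        + (-4 * Complex.I * (w ^ 2 - z ^ 2)) * (u : ℂ))) := by
    intro s u
    unfold rxtQ rxtDen
    ring_nf
  have hd : ∀ s u : ℝ, rxtDen z w o p s u = 1 + o * p *
      Complex.exp ((-2 * Complex.I * (w - z)) * (s : ℂ)
        + (-4 * Complex.I * (w ^ 2 - z ^ 2)) * (u : ℂ)) := by
    intro s u
    unfold rxtDen
    ring_nf
  rw [hd] at hD hD'
  have hneg : ∀ a b : ℂ, Complex.exp (a * ((-x : ℝ) : ℂ) + b * ((-t : ℝ) : ℂ))
      = (Complex.exp (a * (x : ℂ) + b * (t : ℂ)))⁻¹ := by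
    intro a b
    rw [← Complex.exp_neg]
    push_cast
    ring_nf
  rw [hneg] at hD'
  have hxx := deriv_deriv_soliton (2 * Complex.I * (w - z) * p) (o * p) (-2 * Complex.I * w)
    (-4 * Complex.I * w ^ 2 * (t : ℂ)) (-2 * Complex.I * (w - z))
    (-4 * Complex.I * (w ^ 2 - z ^ 2) * (t : ℂ)) x hD
  -- For the `t`-derivative the roles of the two summands of the exponent are exchanged.
  have hcomm := hD
  rw [add_comm (_ * (x : ℂ))] at hcomm
  have ht := (hasDerivAt_soliton (2 * Complex.I * (w - z) * p) (o * p) (-4 * Complex.I * w ^ 2)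
    (-2 * Complex.I * w * (x : ℂ)) (-4 * Complex.I * (w ^ 2 - z ^ 2))
    (-2 * Complex.I * (w - z) * (x : ℂ)) t hcomm).deriv
  unfold pdt pdxx pdx
  simp only [hx, hneg]
  rw [hxx]
  simp only [add_comm (_ * (x : ℂ))] at hD hD' ⊢
  rw [ht]
  exact soliton_identity z w o p _ _ ho hp (Complex.exp_ne_zero _) (Complex.exp_ne_zero _) hD hD'
end
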